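/- Let q ≥ 2 and L ≥ 2 be integers and let c_1, …, c_L ∈ [q]^n. Then the average pairwise relative Hamming distance δ := (Σ_{1≤i<j≤L} δ(c_i,c_j)) / (L choose 2) satisfies δ = (L²(q−1)n − ‖Σ_{i=1}^{L} φ(c_i)‖₂²) / (q·L·(L−1)·n). -/

import Mathlib

open scoped BigOperators

/-- Relative Hamming distance between two strings of length n. -/
noncomputable def relDist {n : ℕ} {A : Type*} (x y : Fin n → A) : ℝ :=
  ({i : Fin n | x i ≠ y i}.ncard : ℝ) / (n : ℝ)

/-- A code C ⊆ A^n is (ρ, L)-list decodable if every Hamming ball of relative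
radius (strictly) ρ contains at most L codewords. -/
def listDecodable {n : ℕ} {A : Type*} (C : Set (Fin n → A)) (ρ L : ℝ) : Prop :=
  ∀ y : Fin n → A, ({c | c ∈ C ∧ relDist c y < ρ}.ncard : ℝ) ≤ L

/-- Average pairwise relative Hamming distance of an L-tuple of codewords. -/
noncomputable def avgPairDist {n L : ℕ} {A : Type*} (c : Fin L → (Fin n → A)) : ℝ :=
  (∑ i : Fin L, ∑ j : Fin L, if i < j then relDist (c i) (c j) else 0) / (L.choose 2 : ℝ)

/-- Simplex encoding of a symbol x ∈ {0,…,q−1}: the vector (ω^{x·α})_{α ∈ {1,…,q−1}}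
in ℂ^{q−1}, where ω = e^{2πi/q}. -/
noncomputable def simplexEnc (q : ℕ) (x : ℕ) (α : Fin (q - 1)) : ℂ :=
  Complex.exp (2 * (Real.pi : ℂ) * Complex.I * (x : ℂ) * (((α : ℕ) : ℂ) + 1) / (q : ℂ))

/-- Coordinatewise extension of the simplex encoding to strings in [q]^n,
giving a vector in ℂ^{(q−1)n}. -/
noncomputable def simplexEncVec (q n : ℕ) (x : Fin n → Fin q) : Fin n × Fin (q - 1) → ℂ :=
  fun p => simplexEnc q (x p.1 : ℕ) p.2

/-- Hermitian inner product ⟨v,w⟩ = Σ_i v_i w_i^*. -/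
noncomputable def cinner {ι : Type*} [Fintype ι] (v w : ι → ℂ) : ℂ :=
  ∑ i, v i * (starRingEnd ℂ) (w i)

/-- Squared Euclidean norm of a complex vector. -/
noncomputable def normSq2 {ι : Type*} [Fintype ι] (v : ι → ℂ) : ℝ :=
  ∑ i, Complex.normSq (v i)

/-! The simplex encoding is equidistant: by orthogonality of the `q`-th roots of unity,
`⟨φ(x), φ(y)⟩ = (q - 1) n - q · d(x, y)` where `d` is the (unnormalised) Hamming distance.
Summing this over all ordered pairs `(cᵢ, cⱼ)` gives `‖∑ φ(cᵢ)‖₂²` on the left, and on the right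
`L² (q - 1) n` minus `q` times a sum in which every unordered pair is counted twice. -/

section RootsOfUnity

variable {R : Type*} [Ring R] [NoZeroDivisors R] [DecidableEq R] {z : R} {q : ℕ}

lemma geom_sum_eq_ite_of_pow_eq_one (hz : z ^ q = 1) :
    ∑ k ∈ Finset.range q, z ^ k = if z = 1 then (q : R) else 0 := by
  split_ifs with h
  · simp [h]
  · have hmul : (∑ k ∈ Finset.range q, z ^ k) * (z - 1) = 0 := by
      rw [geom_sum_mul, hz, sub_self]
    exact (mul_eq_zero.mp hmul).resolve_right (sub_ne_zero.mpr h)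

lemma sum_pow_succ_eq_ite_of_pow_eq_one (hq : q ≠ 0) (hz : z ^ q = 1) :
    ∑ α : Fin (q - 1), z ^ ((α : ℕ) + 1) = (if z = 1 then (q : R) else 0) - 1 := by
  obtain ⟨m, rfl⟩ := Nat.exists_eq_succ_of_ne_zero hq
  rw [← geom_sum_eq_ite_of_pow_eq_one hz, Finset.sum_range_succ', pow_zero, add_sub_cancel_right]
  exact Fin.sum_univ_eq_sum_range (fun k => z ^ (k + 1)) m

end RootsOfUnity

lemma sum_sum_eq_two_nsmul_sum_sum_lt {ι M : Type*} [Fintype ι] [LinearOrder ι]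
    [AddCommMonoid M] (f : ι → ι → M) (hdiag : ∀ i, f i i = 0) (hsymm : ∀ i j, f i j = f j i) :
    ∑ i, ∑ j, f i j = 2 • ∑ i, ∑ j, if i < j then f i j else 0 := by
  have hsplit (i j : ι) :
      f i j = (if i < j then f i j else 0) + (if j < i then f j i else 0) := by
    rcases lt_trichotomy i j with h | rfl | h
    · simp [h, h.not_gt]
    · simp [hdiag]
    · simp [h, h.not_gt, hsymm i j]
  calc ∑ i, ∑ j, f i j
      = ∑ i, ∑ j, ((if i < j then f i j else 0) + (if j < i then f j i else 0)) :=
        Finset.sum_congr rfl fun i _ => Finset.sum_congr rfl fun j _ => hsplit i j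
    _ = (∑ i, ∑ j, if i < j then f i j else 0) + ∑ i, ∑ j, if j < i then f j i else 0 := by
        simp only [Finset.sum_add_distrib]
    _ = 2 • ∑ i, ∑ j, if i < j then f i j else 0 := by
        rw [Finset.sum_comm (f := fun i j => if j < i then f j i else 0), two_nsmul]

section HammingDist

variable {n : ℕ} {A : Type*} [DecidableEq A]

lemma relDist_eq_hammingDist_div (x y : Fin n → A) :
    relDist x y = (hammingDist x y : ℝ) / n := by
  rw [relDist, hammingDist, ← Set.ncard_coe_finset, Finset.coe_filter_univ]

lemma avgPairDist_eq_sum_hammingDist_div {L : ℕ} (c : Fin L → Fin n → A) :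
    avgPairDist c = (∑ i, ∑ j, (hammingDist (c i) (c j) : ℝ)) / (L * (L - 1) * n) := by
  have hpairs : ∑ i, ∑ j, (hammingDist (c i) (c j) : ℝ) =
      2 * ∑ i, ∑ j, if i < j then (hammingDist (c i) (c j) : ℝ) else 0 := by
    rw [sum_sum_eq_two_nsmul_sum_sum_lt (fun i j => (hammingDist (c i) (c j) : ℝ))
      (fun i => by rw [hammingDist_self, Nat.cast_zero]) (fun i j => by rw [hammingDist_comm]),
      nsmul_eq_mul, Nat.cast_ofNat]
  have hrel : (∑ i, ∑ j, if i < j then relDist (c i) (c j) else 0) =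
      (∑ i, ∑ j, if i < j then (hammingDist (c i) (c j) : ℝ) else 0) / n := by
    simp only [relDist_eq_hammingDist_div, Finset.sum_div, ite_div, zero_div]
  rw [avgPairDist, hrel, hpairs, Nat.cast_choose_two, div_right_comm, div_div_eq_mul_div,
    div_div, mul_comm (2 : ℝ)]

end HammingDist

lemma ofReal_normSq2_sum {ι κ : Type*} [Fintype ι] (s : Finset κ) (v : κ → ι → ℂ) :
    (normSq2 (fun p => ∑ i ∈ s, v i p) : ℂ) = ∑ i ∈ s, ∑ j ∈ s, cinner (v i) (v j) := by
  simp only [normSq2, cinner, Complex.ofReal_sum, ← Complex.mul_conj, map_sum, Finset.sum_mul_sum]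
  rw [Finset.sum_comm]
  exact Finset.sum_congr rfl fun i _ => Finset.sum_comm

section SimplexEnc

variable {q : ℕ}

lemma simplexEnc_eq_pow (x : ℕ) (α : Fin (q - 1)) :
    simplexEnc q x α = (Complex.exp (2 * Real.pi * Complex.I / q) ^ x) ^ ((α : ℕ) + 1) := by
  rw [simplexEnc, ← Complex.exp_nat_mul, ← Complex.exp_nat_mul]
  congr 1
  push_cast
  ring

lemma simplexEnc_mul_conj (hq : q ≠ 0) (x y : ℕ) (α : Fin (q - 1)) :
    simplexEnc q x α * (starRingEnd ℂ) (simplexEnc q y α) =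
      (Complex.exp (2 * Real.pi * Complex.I / q) ^ x /
        Complex.exp (2 * Real.pi * Complex.I / q) ^ y) ^ ((α : ℕ) + 1) := by
  have hconj := Complex.inv_eq_conj ((Complex.isPrimitiveRoot_exp q hq).norm'_eq_one hq)
  rw [simplexEnc_eq_pow, simplexEnc_eq_pow, map_pow, map_pow, ← hconj, inv_pow, ← mul_pow,
    ← div_eq_mul_inv]

lemma cinner_simplexEnc (x y : Fin q) :
    cinner (simplexEnc q x) (simplexEnc q y) = (if x = y then (q : ℂ) else 0) - 1 := by
  have hq : q ≠ 0 := x.pos.ne'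
  have hζ := Complex.isPrimitiveRoot_exp q hq
  simp only [cinner, simplexEnc_mul_conj hq]
  set ζ := Complex.exp (2 * Real.pi * Complex.I / q)
  have hroot : (ζ ^ (x : ℕ) / ζ ^ (y : ℕ)) ^ q = 1 := by
    rw [div_pow, pow_right_comm, pow_right_comm ζ y, hζ.pow_eq_one, one_pow, one_pow, div_one]
  have heq_one : ζ ^ (x : ℕ) / ζ ^ (y : ℕ) = 1 ↔ x = y := by
    rw [div_eq_one_iff_eq (pow_ne_zero _ (hζ.ne_zero hq)), Fin.ext_iff]
    exact ⟨hζ.pow_inj x.isLt y.isLt, congrArg (ζ ^ ·)⟩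
  simp only [sum_pow_succ_eq_ite_of_pow_eq_one hq hroot, heq_one]

lemma cinner_simplexEncVec {n : ℕ} (x y : Fin n → Fin q) :
    cinner (simplexEncVec q n x) (simplexEncVec q n y) =
      ((q : ℂ) - 1) * n - q * hammingDist x y := by
  have hsymbol (k : Fin n) : cinner (simplexEnc q (x k)) (simplexEnc q (y k)) =
      (q : ℂ) - 1 - q * if x k ≠ y k then 1 else 0 := by
    rw [cinner_simplexEnc]
    by_cases h : x k = y k <;> simp [h]
  calc cinner (simplexEncVec q n x) (simplexEncVec q n y)
      = ∑ k, cinner (simplexEnc q (x k)) (simplexEnc q (y k)) := Fintype.sum_prod_type _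
    _ = ((q : ℂ) - 1) * n - q * hammingDist x y := by
        simp only [hsymbol, Finset.sum_sub_distrib, ← Finset.mul_sum, Finset.sum_boole,
          Finset.sum_const, Finset.card_univ, Fintype.card_fin, nsmul_eq_mul, hammingDist]
        ring

lemma normSq2_sum_simplexEncVec {L n : ℕ} (c : Fin L → Fin n → Fin q) :
    normSq2 (fun p => ∑ i, simplexEncVec q n (c i) p) =
      (L : ℝ) ^ 2 * ((q : ℝ) - 1) * n - q * ∑ i, ∑ j, (hammingDist (c i) (c j) : ℝ) := by
  apply Complex.ofReal_injective
  rw [ofReal_normSq2_sum]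
  simp only [cinner_simplexEncVec, Finset.sum_sub_distrib, ← Finset.mul_sum, Finset.sum_const,
    Finset.card_univ, Fintype.card_fin, nsmul_eq_mul]
  push_cast
  ring

end SimplexEnc

/-- The average pairwise relative Hamming distance of c_1, …, c_L ∈ [q]^n
equals (L²(q−1)n − ‖Σ_i φ(c_i)‖₂²) / (qL(L−1)n). -/
theorem stmt6 (q L n : ℕ) (hq : 2 ≤ q) (hL : 2 ≤ L) (c : Fin L → (Fin n → Fin q)) :
    avgPairDist c =
      ((L : ℝ) ^ 2 * ((q : ℝ) - 1) * n -
          normSq2 (fun p => ∑ i : Fin L, simplexEncVec q n (c i) p)) /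
        ((q : ℝ) * L * ((L : ℝ) - 1) * n) := by
  have hq0 : (q : ℝ) ≠ 0 := Nat.cast_ne_zero.mpr (by omega)
  rw [avgPairDist_eq_sum_hammingDist_div, normSq2_sum_simplexEncVec, sub_sub_cancel,
    mul_assoc (q : ℝ), mul_assoc (q : ℝ), mul_div_mul_left _ _ hq0]
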